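/- Let σ be a nonempty permutation. If a permutation φ is σ-narrow with a σ-core φ⁻, and σ contains no interval copy of φ and no interval copy of φ⁻, then φ is a σ-annihilator. -/

import Mathlib

/-!
The permutation pattern poset and its Möbius function.

A permutation of length `n` is represented as an element of the symmetric
group on `Fin n`; the collection of all permutations of all lengths is the
sigma type `PPerm`.  Pattern containment `PPerm.Le` makes `PPerm` into the
permutation pattern poset, and `mu` is its Möbius function, defined by the
usual recursion `μ(σ,σ) = 1`, `μ(σ,π) = -∑_{σ ≤ λ < π} μ(σ,λ)` for `σ < π`
and `μ(σ,π) = 0` otherwise.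
-/

open scoped Classical

/-- A permutation of an arbitrary finite length `n`, as an element of the
symmetric group on `Fin n`. -/
abbrev PPerm : Type := Σ n : ℕ, Equiv.Perm (Fin n)

namespace PPerm

/-- Classical pattern containment `σ ≤ π`: there is a strictly increasing map
of positions along which `π` realises the same relative order as `σ`. -/
def Le (σ π : PPerm) : Prop :=
  ∃ f : Fin σ.1 → Fin π.1, StrictMono f ∧
    ∀ a b : Fin σ.1, σ.2 a < σ.2 b ↔ π.2 (f a) < π.2 (f b)

/-- Strict pattern containment. -/
def Lt (σ π : PPerm) : Prop := Le σ π ∧ σ ≠ π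

/-- The permutation `1` of length one. -/
def one : PPerm := ⟨1, 1⟩

/-- The direct sum `α ⊕ β` of two permutations: `β` is placed after and
above `α`. -/
def dsum (α β : PPerm) : PPerm :=
  ⟨α.1 + β.1, finSumFinEquiv.symm.trans ((Equiv.sumCongr α.2 β.2).trans finSumFinEquiv)⟩

end PPerm

/-- Fuelled recursion computing the Möbius function of the permutation
pattern poset.  Any `λ` with `σ ≤ λ < π` has length `< |π|`, so for any
fuel `≥ |π| + 1` this computes the standard recursion
`μ(σ,σ) = 1`, `μ(σ,π) = -∑_{σ ≤ λ < π} μ(σ,λ)` for `σ < π`, and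
`μ(σ,π) = 0` when `σ ≰ π`. -/
noncomputable def muAux : ℕ → PPerm → PPerm → ℤ
  | 0, _, _ => 0
  | n + 1, σ, π =>
    if σ = π then 1
    else if PPerm.Le σ π then
      - ∑ m ∈ Finset.range π.1,
          ∑ p ∈ Finset.univ.filter
              (fun p : Equiv.Perm (Fin m) => PPerm.Le σ ⟨m, p⟩ ∧ PPerm.Le ⟨m, p⟩ π),
            muAux n σ ⟨m, p⟩
    else 0

/-- The Möbius function of the permutation pattern poset. -/
noncomputable def mu (σ π : PPerm) : ℤ := muAux (π.1 + 1) σ π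

/-- The closed interval `[σ, π]` of the permutation pattern poset, as a
finset (any `λ ≤ π` has length `≤ |π|`). -/
noncomputable def intervalCC (σ π : PPerm) : Finset PPerm :=
  (Finset.range (π.1 + 1)).biUnion fun m =>
    (Finset.univ.filter fun p : Equiv.Perm (Fin m) =>
        PPerm.Le σ ⟨m, p⟩ ∧ PPerm.Le ⟨m, p⟩ π).image fun p => (⟨m, p⟩ : PPerm)

/-- The half-open interval `[σ, π)` of the permutation pattern poset. -/
noncomputable def intervalCO (σ π : PPerm) : Finset PPerm :=
  (intervalCC σ π).filter fun lam => lam ≠ π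

/-- `π` contains an interval copy of `α`: there is a set of `|α|` contiguous
positions of `π` (starting at position `i`), whose values form a contiguous
range (starting at value `v`), and whose entries are order-isomorphic
to `α`. -/
def HasIntervalCopy (π α : PPerm) : Prop :=
  ∃ (f : Fin α.1 → Fin π.1) (i v : ℕ),
    (∀ a : Fin α.1, (f a : ℕ) = i + (a : ℕ)) ∧
    (∀ a : Fin α.1, v ≤ (π.2 (f a) : ℕ) ∧ (π.2 (f a) : ℕ) < v + α.1) ∧
    (∀ a b : Fin α.1, α.2 a < α.2 b ↔ π.2 (f a) < π.2 (f b))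

/-- `φ` is a `σ`-annihilator: every permutation containing an interval copy
of `φ` is a `σ`-zero, i.e. has `μ(σ,·) = 0`. -/
def IsSigmaAnnihilator (σ φ : PPerm) : Prop :=
  ∀ π : PPerm, HasIntervalCopy π φ → mu σ π = 0

/-- `φ` is `σ`-narrow with `σ`-core `φ⁻`: `φ⁻` is a permutation of length
`|φ| − 1` contained in `φ` such that every (nonempty) permutation in
`[1,φ) ∖ [1,φ⁻]` is a `σ`-annihilator. -/
def IsSigmaNarrowWithCore (σ φ φm : PPerm) : Prop :=
  φm.1 + 1 = φ.1 ∧ PPerm.Le φm φ ∧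
    ∀ lam : PPerm, 0 < lam.1 → PPerm.Lt lam φ → ¬ PPerm.Le lam φm →
      IsSigmaAnnihilator σ lam

namespace PPerm

/-- `f` is an embedding of `σ` into `π`. -/
def Emb (σ π : PPerm) (f : Fin σ.1 → Fin π.1) : Prop :=
  StrictMono f ∧ ∀ a b : Fin σ.1, σ.2 a < σ.2 b ↔ π.2 (f a) < π.2 (f b)

/-- Standardisation of the entries of `π` at positions in `S`. -/
lemma exists_std (π : PPerm) (S : Finset (Fin π.1)) :
    ∃ (τ : PPerm) (f : Fin τ.1 → Fin π.1), τ.1 = S.card ∧ Emb τ π f ∧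
      ∀ x, x ∈ S ↔ ∃ a, f a = x := by
  have hc : (S.map π.2.toEmbedding).card = S.card := Finset.card_map _
  let e := S.orderIsoOfFin rfl
  let e' := (S.map π.2.toEmbedding).orderIsoOfFin hc
  let q : S ≃ (S.map π.2.toEmbedding : Finset (Fin π.1)) :=
    π.2.subtypeEquiv (fun a => by simp)
  refine ⟨⟨S.card, (e.toEquiv.trans q).trans e'.symm.toEquiv⟩, fun a => (e a : Fin π.1),
    rfl, ⟨?_, ?_⟩, ?_⟩
  · intro a b hab
    exact e.strictMono hab
  · intro a b
    change e'.symm (q (e a)) < e'.symm (q (e b)) ↔ _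
    rw [e'.symm.lt_iff_lt]
    rfl
  · intro x
    constructor
    · intro hx
      exact ⟨e.symm ⟨x, hx⟩, by simp⟩
    · rintro ⟨a, rfl⟩
      exact (e a).2

/-- Embeddings into `π` with range inside that of `g` factor through `g`. -/
lemma factor {α β π : PPerm} {f : Fin α.1 → Fin π.1} {g : Fin β.1 → Fin π.1}
    (hf : Emb α π f) (hg : Emb β π g) (h : ∀ a, ∃ b, g b = f a) :
    ∃ k, Emb α β k ∧ ∀ a, g (k a) = f a := by
  choose k hk using h
  refine ⟨k, ⟨?_, ?_⟩, hk⟩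
  · intro a b hab
    rw [← hg.1.lt_iff_lt, hk, hk]
    exact hf.1 hab
  · intro a b
    rw [hg.2, hk, hk, hf.2]

lemma Emb.comp {α β π : PPerm} {f : Fin α.1 → Fin β.1} {g : Fin β.1 → Fin π.1}
    (hf : Emb α β f) (hg : Emb β π g) : Emb α π (fun a => g (f a)) :=
  ⟨fun _ _ h => hg.1 (hf.1 h), fun a b => by rw [hf.2, hg.2]⟩

lemma Le.trans' {α β γ : PPerm} (h : Le α β) (h' : Le β γ) : Le α γ := by
  obtain ⟨f, hf⟩ := h
  obtain ⟨g, hg⟩ := h'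
  exact ⟨_, Emb.comp hf hg⟩

lemma Emb.card_le {α β : PPerm} {f : Fin α.1 → Fin β.1} (h : Emb α β f) : α.1 ≤ β.1 := by
  simpa using Fintype.card_le_of_injective f h.1.injective

lemma Le.card_le {α β : PPerm} (h : Le α β) : α.1 ≤ β.1 := by
  obtain ⟨f, hf⟩ := h
  exact Emb.card_le hf

lemma strictMono_fin_self {m : ℕ} {f : Fin m → Fin m} (h : StrictMono f) : f = id := by
  have hb : Function.Bijective f := Finite.injective_iff_bijective.mp h.injective
  have : h.orderIsoOfSurjective f hb.2 = OrderIso.refl _ := Subsingleton.elim _ _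
  funext a
  exact congrArg (fun e : Fin m ≃o Fin m => e a) this

lemma Le.eq_of_card {m : ℕ} {p q : Equiv.Perm (Fin m)}
    (h : Le ⟨m, p⟩ ⟨m, q⟩) : p = q := by
  obtain ⟨f, hf, h2⟩ := h
  have hf' : f = id := strictMono_fin_self hf
  subst hf'
  have : StrictMono (fun a => q (p.symm a)) := by
    intro a b hab
    have := (h2 (p.symm a) (p.symm b)).1 (by simpa using hab)
    simpa using this
  have h3 := strictMono_fin_self this
  ext a
  have := congrFun h3 (p a)
  simp at this
  rw [this]

/-- Values of a strictly monotone map with convex range. -/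
lemma contiguous {m n : ℕ} (k : Fin m → Fin n) (hk : StrictMono k)
    (hc : ∀ a b y, k a ≤ y → y ≤ k b → ∃ c, k c = y) :
    ∃ i : ℕ, ∀ a, (k a : ℕ) = i + (a : ℕ) := by
  rcases m with _ | m
  · exact ⟨0, fun a => a.elim0⟩
  refine ⟨k 0, ?_⟩
  intro a
  obtain ⟨a, ha⟩ := a
  induction a with
  | zero => simp
  | succ a ih =>
    have ih := ih (by omega)
    have h1 : k ⟨a, by omega⟩ < k ⟨a + 1, ha⟩ := hk (by simp)
    have h1' : (k ⟨a, by omega⟩ : ℕ) < k ⟨a + 1, ha⟩ := h1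
    have hlt := (k ⟨a + 1, ha⟩).2
    obtain ⟨c, hc⟩ := hc ⟨a, by omega⟩ ⟨a + 1, ha⟩ ⟨(k ⟨a, by omega⟩ : ℕ) + 1, by omega⟩
      (Fin.mk_le_mk.2 (by simp)) (Fin.mk_le_mk.2 h1')
    have h2 : k ⟨a, by omega⟩ < k c := by rw [hc]; exact Fin.lt_def.2 (by simp)
    have h3 : (⟨a, by omega⟩ : Fin (m + 1)) < c := hk.lt_iff_lt.1 h2
    have h4 : (⟨a + 1, ha⟩ : Fin (m + 1)) ≤ c := Fin.le_def.2 (Fin.lt_def.1 h3)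
    have h5 : (k ⟨a + 1, ha⟩ : ℕ) ≤ k c := hk.monotone h4
    have h6 : (k c : ℕ) = k ⟨a, by omega⟩ + 1 := by rw [hc]
    simp only at ih ⊢
    omega

lemma convex_of_bounds {m n : ℕ} (p : Fin m → Fin n) (hp : Function.Injective p) (v : ℕ)
    (hv : ∀ a, v ≤ (p a : ℕ) ∧ (p a : ℕ) < v + m) (a b : Fin m) (y : Fin n)
    (h1 : p a ≤ y) (h2 : y ≤ p b) : ∃ c, p c = y := by
  have himg : (Finset.univ.image fun a => (p a : ℕ)) = Finset.Ico v (v + m) := by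
    apply Finset.eq_of_subset_of_card_le
    · intro x hx
      simp only [Finset.mem_image, Finset.mem_univ, true_and] at hx
      obtain ⟨a, rfl⟩ := hx
      simpa using hv a
    · rw [Finset.card_image_of_injective _ (fun a b h => hp (Fin.ext h))]
      simp
  have h1' : (p a : ℕ) ≤ y := h1
  have h2' : (y : ℕ) ≤ p b := h2
  have : (y : ℕ) ∈ Finset.Ico v (v + m) := by
    have := hv a
    have := hv b
    simp; omega
  rw [← himg] at this
  simp only [Finset.mem_image, Finset.mem_univ, true_and] at this
  obtain ⟨c, hc⟩ := this
  exact ⟨c, Fin.ext hc⟩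

/-- `f` embeds `φ` in `π` as an interval. -/
def IntEmb (φ π : PPerm) (f : Fin φ.1 → Fin π.1) : Prop :=
  Emb φ π f ∧ (∀ a b y, f a ≤ y → y ≤ f b → ∃ c, f c = y) ∧
    (∀ a b y, π.2 (f a) ≤ π.2 y → π.2 y ≤ π.2 (f b) → ∃ c, f c = y)

lemma hasIntervalCopy_iff (π φ : PPerm) : HasIntervalCopy π φ ↔ ∃ f, IntEmb φ π f := by
  constructor
  · rintro ⟨f, i, v, h1, h2, h3⟩
    have hm : StrictMono f := by
      intro a b hab
      rw [Fin.lt_def, h1, h1]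
      have : (a : ℕ) < b := hab
      omega
    refine ⟨f, ⟨hm, h3⟩, ?_, ?_⟩
    · exact convex_of_bounds f hm.injective i (fun a => by rw [h1]; omega)
    · intro a b y ha hb
      obtain ⟨c, hc⟩ := convex_of_bounds (fun a => π.2 (f a)) (π.2.injective.comp hm.injective)
        v h2 a b (π.2 y) ha hb
      exact ⟨c, π.2.injective hc⟩
  · rintro ⟨f, hf, h1, h2⟩
    obtain ⟨i, hi⟩ := contiguous f hf.1 h1
    have hm : StrictMono (fun a => π.2 (f (φ.2.symm a))) := by
      intro a b hab
      exact (hf.2 _ _).1 (by simpa using hab)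
    obtain ⟨v, hv⟩ := contiguous _ hm (by
      intro a b y ha hb
      obtain ⟨c, hc⟩ := h2 (φ.2.symm a) (φ.2.symm b) (π.2.symm y) (by simpa using ha)
        (by simpa using hb)
      exact ⟨φ.2 c, by simp [hc]⟩)
    refine ⟨f, i, v, hi, ?_, hf.2⟩
    intro a
    have := hv (φ.2 a)
    simp only [Equiv.symm_apply_apply] at this
    have h3 := (φ.2 a).2
    omega

/-- The preimage of an interval is an interval. -/
lemma IntEmb.preimage {φ π ψ lam : PPerm} {f : Fin φ.1 → Fin π.1} (hf : IntEmb φ π f)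
    {h : Fin lam.1 → Fin π.1} (hh : Emb lam π h) {k : Fin ψ.1 → Fin lam.1}
    (hk : Emb ψ lam k) (hr : ∀ x, (∃ a, k a = x) ↔ ∃ c, f c = h x) : IntEmb ψ lam k := by
  have hle : ∀ x y, lam.2 x ≤ lam.2 y → π.2 (h x) ≤ π.2 (h y) := by
    intro x y hxy
    rw [← not_lt, hh.2] at hxy
    exact not_lt.1 hxy
  refine ⟨hk, ?_, ?_⟩
  · intro a b y ha hb
    obtain ⟨c, hc⟩ := (hr (k a)).1 ⟨a, rfl⟩
    obtain ⟨d, hd⟩ := (hr (k b)).1 ⟨b, rfl⟩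
    refine (hr y).2 (hf.2.1 c d _ ?_ ?_)
    · rw [hc]; exact hh.1.monotone ha
    · rw [hd]; exact hh.1.monotone hb
  · intro a b y ha hb
    obtain ⟨c, hc⟩ := (hr (k a)).1 ⟨a, rfl⟩
    obtain ⟨d, hd⟩ := (hr (k b)).1 ⟨b, rfl⟩
    refine (hr y).2 (hf.2.2 c d _ ?_ ?_)
    · rw [hc]; exact hle _ _ ha
    · rw [hd]; exact hle _ _ hb

/-- Replace the part of an embedding that lies in an interval. -/
lemma replace {φ π ψ lam : PPerm} {f : Fin φ.1 → Fin π.1} (hf : IntEmb φ π f)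
    {h : Fin lam.1 → Fin π.1} (hh : Emb lam π h) {k : Fin ψ.1 → Fin lam.1}
    (hk : Emb ψ lam k) (hr : ∀ x, (∃ a, k a = x) ↔ ∃ c, f c = h x)
    {e : Fin ψ.1 → Fin φ.1} (he : Emb ψ φ e) :
    ∃ h', Emb lam π h' ∧ ∀ x, (∃ a, h' x = f (e a)) ∨ (¬ (∃ c, f c = h x) ∧ h' x = h x) := by
  have key : ∀ x, ∃ y, (∃ a, k a = x ∧ y = f (e a)) ∨ (¬ (∃ c, f c = h x) ∧ y = h x) := by
    intro x
    by_cases hx : ∃ a, k a = x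
    · obtain ⟨a, ha⟩ := hx
      exact ⟨_, Or.inl ⟨a, ha, rfl⟩⟩
    · exact ⟨h x, Or.inr ⟨fun hc => hx ((hr x).2 hc), rfl⟩⟩
  choose h' hh' using key
  have hfe := Emb.comp he hf.1
  -- comparison facts
  have P1 : ∀ c d w, ¬ (∃ c, f c = w) → f c < w → f d < w := by
    intro c d w hw h1
    by_contra h2
    exact hw (hf.2.1 c d w h1.le (not_lt.1 h2))
  have P2 : ∀ c d w, ¬ (∃ c, f c = w) → w < f c → w < f d := by
    intro c d w hw h1
    by_contra h2
    exact hw (hf.2.1 d c w (not_lt.1 h2) h1.le)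
  have V1 : ∀ c d w, ¬ (∃ c, f c = w) → π.2 (f c) < π.2 w → π.2 (f d) < π.2 w := by
    intro c d w hw h1
    by_contra h2
    exact hw (hf.2.2 c d w h1.le (not_lt.1 h2))
  have V2 : ∀ c d w, ¬ (∃ c, f c = w) → π.2 w < π.2 (f c) → π.2 w < π.2 (f d) := by
    intro c d w hw h1
    by_contra h2
    exact hw (hf.2.2 d c w (not_lt.1 h2) h1.le)
  refine ⟨h', ⟨?_, ?_⟩, ?_⟩
  · intro x y hxy
    rcases hh' x with ⟨a, rfl, hx⟩ | ⟨hx0, hx⟩ <;> rcases hh' y with ⟨b, rfl, hy⟩ | ⟨hy0, hy⟩ <;>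
      rw [hx, hy]
    · exact hfe.1 (hk.1.lt_iff_lt.1 hxy)
    · obtain ⟨c, hc⟩ := (hr _).1 ⟨a, rfl⟩
      exact P1 c _ _ hy0 (by rw [hc]; exact hh.1 hxy)
    · obtain ⟨c, hc⟩ := (hr _).1 ⟨b, rfl⟩
      exact P2 c _ _ hx0 (by rw [hc]; exact hh.1 hxy)
    · exact hh.1 hxy
  · intro x y
    rcases hh' x with ⟨a, rfl, hx⟩ | ⟨hx0, hx⟩ <;> rcases hh' y with ⟨b, rfl, hy⟩ | ⟨hy0, hy⟩ <;>
      rw [hx, hy]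
    · rw [← hk.2, hfe.2]
    · obtain ⟨c, hc⟩ := (hr _).1 ⟨a, rfl⟩
      rw [hh.2, ← hc]
      exact ⟨V1 _ _ _ hy0, V1 _ _ _ hy0⟩
    · obtain ⟨c, hc⟩ := (hr _).1 ⟨b, rfl⟩
      rw [hh.2, ← hc]
      exact ⟨V2 _ _ _ hx0, V2 _ _ _ hx0⟩
    · exact hh.2 _ _
  · intro x
    rcases hh' x with ⟨a, _, hx⟩ | hx
    · exact Or.inl ⟨a, hx⟩
    · exact Or.inr hx

end PPerm

open PPerm

lemma muAux_fuel (σ : PPerm) : ∀ (n : ℕ) (π : PPerm), π.1 + 1 ≤ n → muAux n σ π = mu σ π := by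
  intro n
  induction n using Nat.strong_induction_on with
  | _ n ih =>
    intro π hn
    obtain ⟨n, rfl⟩ : ∃ k, n = k + 1 := ⟨n - 1, by omega⟩
    unfold mu
    rw [muAux, muAux]
    split_ifs with h1 h2
    · rfl
    · congr 1
      refine Finset.sum_congr rfl fun m hm => Finset.sum_congr rfl fun p _ => ?_
      have hm' := Finset.mem_range.1 hm
      rw [ih n (by omega) ⟨m, p⟩ (by simp only; omega)]
      rcases Nat.lt_or_ge π.1 (n + 1) with h | h
      · exact (ih π.1 h ⟨m, p⟩ hm').symm
      · omega
    · rfl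

lemma mu_rec (σ π : PPerm) (hne : σ ≠ π) (hle : Le σ π) :
    mu σ π = - ∑ m ∈ Finset.range π.1,
          ∑ p ∈ Finset.univ.filter
              (fun p : Equiv.Perm (Fin m) => PPerm.Le σ ⟨m, p⟩ ∧ PPerm.Le ⟨m, p⟩ π),
            mu σ ⟨m, p⟩ := by
  rw [mu, muAux, if_neg hne, if_pos hle]
  congr 1
  refine Finset.sum_congr rfl fun m hm => Finset.sum_congr rfl fun p _ => ?_
  exact muAux_fuel σ _ ⟨m, p⟩ (Finset.mem_range.1 hm)

lemma mu_not_le (σ π : PPerm) (hne : σ ≠ π) (hle : ¬ Le σ π) : mu σ π = 0 := by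
  rw [mu, muAux, if_neg hne, if_neg hle]

lemma sum_mu (σ π : PPerm) (hne : σ ≠ π) :
    ∑ m ∈ Finset.range (π.1 + 1),
          ∑ p ∈ Finset.univ.filter
              (fun p : Equiv.Perm (Fin m) => PPerm.Le σ ⟨m, p⟩ ∧ PPerm.Le ⟨m, p⟩ π),
            mu σ ⟨m, p⟩ = 0 := by
  by_cases hle : Le σ π
  · have h := mu_rec σ π hne hle
    rw [Finset.sum_range_succ]
    have : (Finset.univ.filter
              (fun p : Equiv.Perm (Fin π.1) => PPerm.Le σ ⟨π.1, p⟩ ∧ PPerm.Le ⟨π.1, p⟩ π))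
        = {π.2} := by
      ext p
      simp only [Finset.mem_filter, Finset.mem_univ, true_and, Finset.mem_singleton]
      constructor
      · rintro ⟨_, h⟩
        exact Le.eq_of_card (q := π.2) h
      · rintro rfl
        exact ⟨hle, id, strictMono_id, fun _ _ => Iff.rfl⟩
    rw [this, Finset.sum_singleton]
    change _ + mu σ π = 0
    rw [h]
    ring
  · refine Finset.sum_eq_zero fun m _ => Finset.sum_eq_zero fun p hp => ?_
    simp only [Finset.mem_filter, Finset.mem_univ, true_and] at hp
    exact absurd (Le.trans' hp.1 hp.2) hle

/-- **(Proposition `pro-narrow`.)**  Let `σ` be a nonempty permutation.  If a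
permutation `φ` is `σ`-narrow with a `σ`-core `φ⁻`, and `σ` has no interval
copy of `φ` or of `φ⁻`, then `φ` is a `σ`-annihilator. -/
theorem sigmaNarrow_isSigmaAnnihilator (σ φ φm : PPerm) (hσ : 0 < σ.1)
    (hcore : IsSigmaNarrowWithCore σ φ φm)
    (h₁ : ¬ HasIntervalCopy σ φ) (h₂ : ¬ HasIntervalCopy σ φm) :
    IsSigmaAnnihilator σ φ := by
  obtain ⟨hlen, ⟨g, hg⟩, hnar⟩ := hcore
  change Emb φm φ g at hg
  intro π
  induction hN : π.1 using Nat.strong_induction_on generalizing π with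
  | _ N ih =>
  intro hπ
  have hne : σ ≠ π := by rintro rfl; exact h₁ hπ
  by_cases hle : Le σ π
  swap
  · exact mu_not_le _ _ hne hle
  obtain ⟨f, hf⟩ := (hasIntervalCopy_iff _ _).1 hπ
  -- the missing point of the core
  obtain ⟨c, hc⟩ : ∃ c, ∀ x, (∃ a, g a = x) ↔ x ≠ c := by
    have h1 : ((Finset.univ.image g)ᶜ).card = 1 := by
      rw [Finset.card_compl, Finset.card_image_of_injective _ hg.1.injective]
      simp; omega
    obtain ⟨c, hc⟩ := Finset.card_eq_one.1 h1
    refine ⟨c, fun x => ?_⟩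
    have : x ∈ (Finset.univ.image g)ᶜ ↔ x ∈ ({c} : Finset _) := by rw [hc]
    simp only [Finset.mem_compl, Finset.mem_image, Finset.mem_univ, true_and,
      Finset.mem_singleton] at this
    tauto
  obtain ⟨πm, H, hcard, hH, hS⟩ := exists_std π ({f c}ᶜ)
  have hS' : ∀ x, (∃ a, H a = x) ↔ x ≠ f c := fun x => by rw [← hS]; simp
  have hpos : 0 < π.1 := Fin.pos (f c)
  have hlen' : πm.1 + 1 = π.1 := by
    rw [hcard, Finset.card_compl]; simp; omega
  have hcopy : HasIntervalCopy πm φm := by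
    obtain ⟨k, hk, hk'⟩ := factor (Emb.comp hg hf.1) hH (fun a => by
      rw [hS']
      intro h
      exact (hc (g a)).1 ⟨a, rfl⟩ (hf.1.1.injective h))
    refine (hasIntervalCopy_iff _ _).2 ⟨k, hf.preimage hH hk ?_⟩
    intro x
    constructor
    · rintro ⟨a, rfl⟩
      exact ⟨g a, (hk' a).symm⟩
    · rintro ⟨d, hd⟩
      have h1 : f d ≠ f c := by rw [hd]; exact (hS' _).1 ⟨x, rfl⟩
      obtain ⟨a, rfl⟩ := (hc d).2 (fun h => h1 (by rw [h]))
      exact ⟨a, hH.1.injective (by rw [hk', hd])⟩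
  have hne' : σ ≠ πm := by rintro rfl; exact h₂ hcopy
  rw [mu_rec σ π hne hle, neg_eq_zero, ← hlen', ← sum_mu σ πm hne']
  refine Finset.sum_congr rfl fun m hm => ?_
  symm
  apply Finset.sum_subset
  · intro p hp
    simp only [Finset.mem_filter, Finset.mem_univ, true_and] at hp ⊢
    exact ⟨hp.1, Le.trans' hp.2 ⟨H, hH⟩⟩
  intro p hp hp'
  simp only [Finset.mem_filter, Finset.mem_univ, true_and] at hp hp'
  have hnle : ¬ Le ⟨m, p⟩ πm := fun h => hp' ⟨hp.1, h⟩
  have hmlt : m < N := by rw [← hN, ← hlen']; exact Finset.mem_range.1 hm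
  obtain ⟨h, hh⟩ := hp.2
  change Emb ⟨m, p⟩ π h at hh
  obtain ⟨ψ, k, -, hk, hkS⟩ := exists_std ⟨m, p⟩ (Finset.univ.filter fun x => ∃ d, f d = h x)
  have hr : ∀ x, (∃ a, k a = x) ↔ ∃ d, f d = h x := fun x => by rw [← hkS]; simp
  have hic : HasIntervalCopy ⟨m, p⟩ ψ := (hasIntervalCopy_iff _ _).2 ⟨k, hf.preimage hh hk hr⟩
  by_cases hψ : ψ = φ
  · subst hψ
    exact ih m hmlt ⟨m, p⟩ rfl hic
  by_cases hψm : Le ψ φm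
  · exfalso
    obtain ⟨e, he⟩ := hψm
    obtain ⟨h', hh', hx⟩ := replace hf hh hk hr (Emb.comp he hg)
    obtain ⟨q, hq, -⟩ := factor hh' hH (fun x => by
      rw [hS']
      rcases hx x with ⟨a, ha⟩ | ⟨h0, ha⟩
      · rw [ha]
        intro hb
        exact (hc (g (e a))).1 ⟨_, rfl⟩ (hf.1.1.injective hb)
      · rw [ha]
        intro hb
        exact h0 ⟨c, hb.symm⟩)
    exact hnle ⟨q, hq⟩
  · have hψφ : Le ψ φ := by
      obtain ⟨q, hq, -⟩ := factor (Emb.comp hk hh) hf.1 (fun a => (hr _).1 ⟨a, rfl⟩)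
      exact ⟨q, hq⟩
    refine hnar ψ ?_ ⟨hψφ, hψ⟩ hψm ⟨m, p⟩ hic
    rcases Nat.eq_zero_or_pos ψ.1 with h0 | h0
    · exfalso
      apply hψm
      have hemp : IsEmpty (Fin ψ.1) := by rw [h0]; infer_instance
      exact ⟨fun a => hemp.elim a, fun a => hemp.elim a, fun a => hemp.elim a⟩
    · exact h0
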